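/- Let A = U(g ⊗ ℂ[t]/t^{M}) be the universal enveloping algebra of the truncated current Lie algebra g ⊗ ℂ[t]/t^M, where M = (c+1)N for positive integers c, N. Define the decreasing filtration T_0 ⊇ T_1 ⊇ … by T_0 = A and T_j = (g ⊗ t^N ℂ[t]/t^M)·T_{j−1}. Then the associated graded algebra gr A = ⊕_j T_j/T_{j+1} is isomorphic, as an associative algebra, to U(g ⊗ ℂ[t,u]/⟨t^N, u^{c+1}⟩), via the map sending the class of x ⊗ t^{jN+s} (for 0 ≤ s < N) to x ⊗ u^j t^s. -/

import Mathlib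

open scoped TensorProduct DirectSum

/-- A current algebra `A ⊗[ℂ] g` (base change of a complex Lie algebra `g`) is in
particular a Lie algebra over `ℂ`. -/
noncomputable instance lieAlgebraOfBaseChange (A : Type*) [CommRing A] [Algebra ℂ A]
    (g : Type*) [LieRing g] [LieAlgebra ℂ g] : LieAlgebra ℂ (A ⊗[ℂ] g) where
  lie_smul c x y := by
    rw [← algebraMap_smul A c y, LieAlgebra.lie_smul ((algebraMap ℂ A) c) x y,
      algebraMap_smul]

/-- The truncated polynomial ring `ℂ[t]/t^M`. -/
noncomputable abbrev TruncT (M : ℕ) :=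
  Polynomial ℂ ⧸ Ideal.span {(Polynomial.X : Polynomial ℂ) ^ M}

/-- The truncated polynomial ring `ℂ[t,u]/⟨t^N, u^{c+1}⟩` (with `t = X 0`, `u = X 1`). -/
noncomputable abbrev TruncTU (N c : ℕ) :=
  MvPolynomial (Fin 2) ℂ ⧸
    Ideal.span {(MvPolynomial.X 0 : MvPolynomial (Fin 2) ℂ) ^ N,
      (MvPolynomial.X 1 : MvPolynomial (Fin 2) ℂ) ^ (c + 1)}

/-- `A = U(g ⊗ ℂ[t]/t^M)`. -/
noncomputable abbrev UTrunc (M : ℕ) (g : Type*) [LieRing g] [LieAlgebra ℂ g] :=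
  UniversalEnvelopingAlgebra ℂ (TruncT M ⊗[ℂ] g)

/-- `U(g ⊗ ℂ[t,u]/⟨t^N,u^{c+1}⟩)`, the enveloping algebra of the truncated toroidal
current algebra. -/
noncomputable abbrev UToroidal (N c : ℕ) (g : Type*) [LieRing g] [LieAlgebra ℂ g] :=
  UniversalEnvelopingAlgebra ℂ (TruncTU N c ⊗[ℂ] g)

/-- The subspace of `U(g ⊗ ℂ[t]/t^M)` spanned by the image of `g ⊗ t^N ℂ[t]`. -/
noncomputable def Wsub (M N : ℕ) (g : Type*) [LieRing g] [LieAlgebra ℂ g] :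
    Submodule ℂ (UTrunc M g) :=
  Submodule.span ℂ
    {z | ∃ (p : Polynomial ℂ) (x : g),
      z = UniversalEnvelopingAlgebra.ι ℂ
        ((Ideal.Quotient.mk _ (Polynomial.X ^ N * p) : TruncT M) ⊗ₜ[ℂ] x)}

/-- The decreasing filtration `T_0 ⊇ T_1 ⊇ ⋯` of `A = U(g ⊗ ℂ[t]/t^M)`:
`T_0 = A` and `T_j = (g ⊗ t^N ℂ[t])·T_{j−1}`. -/
noncomputable def Tfil (M N : ℕ) (g : Type*) [LieRing g] [LieAlgebra ℂ g] :
    ℕ → Submodule ℂ (UTrunc M g)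
  | 0 => ⊤
  | j + 1 => Wsub M N g * Tfil M N g j

/-- The associated graded vector space `gr A = ⊕_j T_j/T_{j+1}`. -/
noncomputable abbrev grT (M N : ℕ) (g : Type*) [LieRing g] [LieAlgebra ℂ g] :=
  ⨁ j : ℕ, (Tfil M N g j ⧸ (Tfil M N g (j + 1)).comap (Tfil M N g j).subtype)

section EnvelopingAlgebra

attribute [local instance] LieRing.ofAssociativeRing

variable {L : Type*} [LieRing L] [LieAlgebra ℂ L] {E : Type*} [Ring E] [Algebra ℂ E]

/-- A linear map intertwining brackets with commutators extends to the enveloping algebra. -/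
noncomputable def envLift (A : L →ₗ[ℂ] E) (h : ∀ x y, A ⁅x, y⁆ = A x * A y - A y * A x) :
    UniversalEnvelopingAlgebra ℂ L →ₐ[ℂ] E :=
  UniversalEnvelopingAlgebra.lift ℂ
    { A with map_lie' := fun {x y} => by simpa [LieRing.of_associative_ring_bracket] using h x y }

theorem envLift_ι (A : L →ₗ[ℂ] E) (h : ∀ x y, A ⁅x, y⁆ = A x * A y - A y * A x) (x : L) :
    envLift A h (UniversalEnvelopingAlgebra.ι ℂ x) = A x :=
  UniversalEnvelopingAlgebra.lift_ι_apply ℂ _ x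

theorem ι_lie (x y : L) :
    UniversalEnvelopingAlgebra.ι ℂ ⁅x, y⁆ =
      UniversalEnvelopingAlgebra.ι ℂ x * UniversalEnvelopingAlgebra.ι ℂ y -
        UniversalEnvelopingAlgebra.ι ℂ y * UniversalEnvelopingAlgebra.ι ℂ x := by
  rw [LieHom.map_lie, LieRing.of_associative_ring_bracket]

theorem adjoin_range_ι :
    Algebra.adjoin ℂ (Set.range (UniversalEnvelopingAlgebra.ι ℂ : L → _)) = ⊤ := by
  set S := Algebra.adjoin ℂ (Set.range (UniversalEnvelopingAlgebra.ι ℂ : L → _)) with hS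
  have hmem (x : L) : UniversalEnvelopingAlgebra.ι ℂ x ∈ S :=
    Algebra.subset_adjoin ⟨x, rfl⟩
  let A : L →ₗ[ℂ] S :=
    { toFun := fun x => ⟨UniversalEnvelopingAlgebra.ι ℂ x, hmem x⟩
      map_add' := fun x y => Subtype.ext (map_add _ x y)
      map_smul' := fun r x => Subtype.ext (map_smul _ r x) }
  let F := envLift A fun x y => Subtype.ext (ι_lie x y)
  have hF : S.val.comp F = AlgHom.id ℂ _ := by
    apply UniversalEnvelopingAlgebra.hom_ext
    ext x
    change ((F (UniversalEnvelopingAlgebra.ι ℂ x) : S) : UniversalEnvelopingAlgebra ℂ L) = _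
    rw [envLift_ι]
    rfl
  rw [eq_top_iff]
  intro u _
  rw [← show S.val.comp F u = u by rw [hF]; rfl]
  exact (F u).2

/-- Words in the images of a spanning set span the enveloping algebra. -/
theorem span_words_eq_top {I : Type*} (y : I → L) (hy : Submodule.span ℂ (Set.range y) = ⊤) :
    Submodule.span ℂ (Set.range fun l : List I =>
      (l.map fun i => UniversalEnvelopingAlgebra.ι ℂ (y i)).prod) = ⊤ := by
  set Q := Submodule.span ℂ (Set.range fun l : List I =>
      (l.map fun i => UniversalEnvelopingAlgebra.ι ℂ (y i)).prod) with hQ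
  have hmul : Q * Q ≤ Q := by
    rw [hQ, Submodule.span_mul_span]
    apply Submodule.span_mono
    rintro _ ⟨_, ⟨l, rfl⟩, _, ⟨l', rfl⟩, rfl⟩
    exact ⟨l ++ l', by simp⟩
  rw [eq_top_iff]
  intro u _
  have hu : u ∈ Algebra.adjoin ℂ (Set.range (UniversalEnvelopingAlgebra.ι ℂ : L → _)) := by
    rw [adjoin_range_ι]; trivial
  induction hu using Algebra.adjoin_induction with
  | mem _ h =>
    obtain ⟨x, rfl⟩ := h
    have hx : x ∈ Submodule.span ℂ (Set.range y) := by rw [hy]; trivial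
    induction hx using Submodule.span_induction with
    | mem _ h =>
      obtain ⟨i, rfl⟩ := h
      exact Submodule.subset_span ⟨[i], by simp⟩
    | zero => rw [map_zero]; exact zero_mem _
    | add a b _ _ ha hb => rw [map_add]; exact add_mem (ha trivial) (hb trivial)
    | smul r a _ ha => rw [map_smul]; exact Submodule.smul_mem _ _ (ha trivial)
  | algebraMap r =>
    rw [Algebra.algebraMap_eq_smul_one]
    exact Submodule.smul_mem _ _ (Submodule.subset_span ⟨[], by simp⟩)
  | add a b _ _ ha hb => exact add_mem (ha trivial) (hb trivial)
  | mul a b _ _ ha hb => exact hmul (Submodule.mul_mem_mul (ha trivial) (hb trivial))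

end EnvelopingAlgebra

section Straightening

variable {U : Type*} [Ring U] [Algebra ℂ U] {I : Type*}

/-- If commutators of the generators `y i` are, modulo the next filtration step, linear
combinations of generators of the right weight, then modulo the next filtration step every word
is a linear combination of words in which the letters are put in a preferred order. -/
theorem word_mem_span_multiset (y : I → U) (wt : I → ℕ) (T : ℕ → Submodule ℂ U)
    (hmul : ∀ i j, T i * T j ≤ T (i + j)) (hy : ∀ i, y i ∈ T (wt i))
    (hcomm : ∀ i k, y i * y k - y k * y i ∈
      Submodule.span ℂ {z | ∃ l, wt l = wt i + wt k ∧ z = y l} ⊔ T (wt i + wt k + 1))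
    (l : List I) :
    (l.map y).prod ∈ Submodule.span ℂ {z | ∃ α : Multiset I, (α.map wt).sum = (l.map wt).sum ∧
      z = (α.toList.map y).prod} ⊔ T ((l.map wt).sum + 1) := by
  let D : ℕ → ℕ → Submodule ℂ U := fun n j =>
    Submodule.span ℂ {z | ∃ l : List I, l.length ≤ n ∧ (l.map wt).sum = j ∧
      z = (l.map y).prod} ⊔ T (j + 1)
  have hprod (l : List I) (k : ℕ) (u : U) (hu : u ∈ T k) :
      u * (l.map y).prod ∈ T (k + (l.map wt).sum) := by
    induction l generalizing u k with
    | nil => simpa using hu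
    | cons a l ih =>
      have := ih (k + wt a) (u * y a) (hmul _ _ (Submodule.mul_mem_mul hu (hy a)))
      simpa [mul_assoc, add_assoc] using this
  have hcons (n j : ℕ) (i : I) (u : U) (hu : u ∈ D n j) : y i * u ∈ D (n + 1) (wt i + j) := by
    obtain ⟨a, ha, b, hb, rfl⟩ := Submodule.mem_sup.1 hu
    rw [mul_add]
    refine add_mem ?_ ?_
    · refine Submodule.mem_sup_left ?_
      clear hu
      induction ha using Submodule.span_induction with
      | mem _ h =>
        obtain ⟨l, h1, h2, rfl⟩ := h
        exact Submodule.subset_span ⟨i :: l, by simpa using h1, by simp [h2], by simp⟩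
      | zero => simp
      | add _ _ _ _ h1 h2 => rw [mul_add]; exact add_mem h1 h2
      | smul r _ _ h => rw [mul_smul_comm]; exact Submodule.smul_mem _ _ h
    · refine Submodule.mem_sup_right ?_
      rw [add_assoc]
      exact hmul _ _ (Submodule.mul_mem_mul (hy i) hb)
  have hperm (l l' : List I) (h : l.Perm l') :
      (l.map y).prod - (l'.map y).prod ∈ D (l.length - 1) (l.map wt).sum := by
    induction h with
    | nil => simp
    | @cons a l₁ l₂ h ih =>
      rcases Nat.eq_zero_or_pos l₁.length with h0 | h0
      · have h1 : l₁ = [] := List.length_eq_zero_iff.1 h0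
        subst h1
        rw [List.nil_perm.1 h]
        simp
      · have := hcons _ _ a _ ih
        rw [Nat.sub_add_cancel h0] at this
        simpa [mul_sub] using this
    | swap a b l =>
      have key : y b * y a - y a * y b ∈ Submodule.span ℂ
          {z | ∃ l, wt l = wt b + wt a ∧ z = y l} ⊔ T (wt b + wt a + 1) := hcomm b a
      have heq : ((b :: a :: l).map y).prod - ((a :: b :: l).map y).prod
          = (y b * y a - y a * y b) * (l.map y).prod := by
        simp [sub_mul, mul_assoc]
      rw [heq]
      obtain ⟨u, hu, v, hv, huv⟩ := Submodule.mem_sup.1 key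
      rw [← huv, add_mul]
      refine add_mem ?_ ?_
      · refine Submodule.mem_sup_left ?_
        clear huv key
        induction hu using Submodule.span_induction with
        | mem _ h =>
          obtain ⟨i, h1, rfl⟩ := h
          exact Submodule.subset_span ⟨i :: l, by simp, by simp [h1, add_assoc], by simp⟩
        | zero => simp
        | add _ _ _ _ h1 h2 => rw [add_mul]; exact add_mem h1 h2
        | smul r _ _ h => rw [smul_mul_assoc]; exact Submodule.smul_mem _ _ h
      · refine Submodule.mem_sup_right ?_
        have := hprod l _ v hv
        convert this using 2
        simp; ring
    | @trans l₁ l₂ l₃ h1 h2 ih1 ih2 =>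
      rw [← h1.length_eq, ← (h1.map wt).sum_eq] at ih2
      simpa using add_mem ih1 ih2
  let S : ℕ → Submodule ℂ U := fun j =>
    Submodule.span ℂ {z | ∃ α : Multiset I, (α.map wt).sum = j ∧
      z = (α.toList.map y).prod} ⊔ T (j + 1)
  have hmain (n : ℕ) : ∀ l : List I, l.length ≤ n → (l.map y).prod ∈ S (l.map wt).sum := by
    induction n with
    | zero =>
      intro l hl
      have h1 : l = [] := List.length_eq_zero_iff.1 (Nat.le_zero.1 hl)
      subst h1
      exact Submodule.mem_sup_left (Submodule.subset_span ⟨0, by simp, by simp⟩)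
    | succ n ih =>
      intro l hl
      have hp : l.Perm (l : Multiset I).toList := by
        rw [← Multiset.coe_eq_coe, Multiset.coe_toList]
      have h1 := hperm _ _ hp
      have hD : D (l.length - 1) (l.map wt).sum ≤ S (l.map wt).sum := by
        refine sup_le (Submodule.span_le.2 ?_) le_sup_right
        rintro _ ⟨l', h2, h3, rfl⟩
        rw [← h3]
        exact ih l' (by omega)
      have h4 : (((l : Multiset I).toList).map y).prod ∈ S (l.map wt).sum :=
        Submodule.mem_sup_left (Submodule.subset_span ⟨l, by simp, rfl⟩)
      simpa using add_mem (hD h1) h4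
  exact hmain _ l le_rfl

end Straightening

section DifferentialOperators

variable {C B I : Type*} [CommRing C] [Algebra ℂ C] [CommRing B] [Algebra ℂ B]

/-- Modulo higher powers of an ideal containing `f`, a word of `m` derivations applied to `f ^ n`
is `n (n - 1) ⋯ (n - m + 1) f ^ (n - m)` times the product of the derivatives of `f`. -/
theorem word_derivation_pow (D : I → Derivation ℂ C C) (J : Ideal C) {f : C} (hf : f ∈ J) (n : ℕ)
    (l : List I) (hl : l.length ≤ n) :
    (l.map fun i => (D i : Module.End ℂ C)).prod (f ^ n) -
      (n.descFactorial l.length : C) * (f ^ (n - l.length) * (l.map fun i => D i f).prod) ∈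
      J ^ (n - l.length + 1) := by
  have hD (i : I) (k : ℕ) (a : C) (ha : a ∈ J ^ (k + 1)) : D i a ∈ J ^ k := by
    induction k generalizing a with
    | zero => simp
    | succ k ih =>
      rw [pow_succ] at ha
      induction ha using Submodule.mul_induction_on' with
      | mem_mul_mem a ha b hb =>
        rw [Derivation.leibniz, smul_eq_mul, smul_eq_mul]
        refine add_mem (Ideal.mul_mem_right _ _ ha) ?_
        rw [pow_succ, mul_comm]
        exact Ideal.mul_mem_mul hb (ih a ha)
      | add a _ b _ h1 h2 => rw [map_add]; exact add_mem h1 h2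
  induction l with
  | nil => simp
  | cons i l ih =>
    have hl' : l.length + 1 ≤ n := by simpa using hl
    obtain ⟨k, hk⟩ : ∃ k, n - l.length = k + 1 := ⟨n - l.length - 1, by omega⟩
    have hk' : n - (i :: l).length = k := by simp only [List.length_cons]; omega
    have h1 := hD i _ _ (ih (by omega))
    rw [hk] at h1
    rw [hk']
    have hfact : (n.descFactorial (i :: l).length : C) =
        ((k + 1 : ℕ) : C) * (n.descFactorial l.length : C) := by
      rw [List.length_cons, Nat.descFactorial_succ, hk, Nat.cast_mul]
    have hX : D i ((n.descFactorial l.length : C) * (f ^ (k + 1) * (l.map fun i => D i f).prod)) =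
        (n.descFactorial (i :: l).length : C) * (f ^ k * ((i :: l).map fun i => D i f).prod) +
          f ^ (k + 1) * ((n.descFactorial l.length : C) * D i (l.map fun i => D i f).prod) := by
      rw [hfact]
      simp only [Derivation.leibniz, Derivation.leibniz_pow, Derivation.map_natCast, smul_eq_mul,
        List.map_cons, List.prod_cons, Nat.add_sub_cancel, nsmul_eq_mul]
      ring
    rw [map_sub, hX] at h1
    have h2 : f ^ (k + 1) * ((n.descFactorial l.length : C) * D i (l.map fun i => D i f).prod) ∈
        J ^ (k + 1) := Ideal.mul_mem_right _ _ (Ideal.pow_mem_pow hf _)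
    have := add_mem h1 h2
    rw [sub_add_eq_sub_sub, sub_add_cancel] at this
    simpa using this

/-- Ordered words in derivations whose values on some function are algebraically independent at
some point are linearly independent as operators. -/
theorem linearIndependent_word_derivation (D : I → Derivation ℂ C C)
    (ε : C →ₐ[ℂ] MvPolynomial I ℂ) (f : C) (hf : ε f = 0)
    (hD : ∀ i, ε (D i f) = MvPolynomial.X i) :
    LinearIndependent ℂ fun α : Multiset I =>
      (α.toList.map fun i => (D i : Module.End ℂ C)).prod := by
  classical
  have hlow (n : ℕ) (l : List I) (hl : l.length ≤ n) :
      ε ((l.map fun i => (D i : Module.End ℂ C)).prod (f ^ n)) =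
        if l.length = n then MvPolynomial.monomial (Multiset.toFinsupp (l : Multiset I))
          ((n.factorial : ℕ) : ℂ) else 0 := by
    have h1 := word_derivation_pow D (RingHom.ker ε) (f := f) hf n l hl
    have h2 : ε _ = 0 := Ideal.pow_le_self (Nat.succ_ne_zero _) h1
    rw [map_sub, sub_eq_zero] at h2
    rw [h2]
    split_ifs with h
    · subst h
      have h3 : ∀ l : List I, ε (l.map fun i => D i f).prod =
          MvPolynomial.monomial (Multiset.toFinsupp (l : Multiset I)) 1 := by
        intro l
        induction l with
        | nil => simp
        | cons a l ih =>
          rw [List.map_cons, List.prod_cons, map_mul, ih, hD, ← Multiset.cons_coe,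
            ← Multiset.singleton_add, map_add, Multiset.toFinsupp_singleton, MvPolynomial.X,
            MvPolynomial.monomial_mul, one_mul]
      rw [Nat.sub_self, pow_zero, one_mul, map_mul, h3, Nat.descFactorial_self, map_natCast,
        ← map_natCast (MvPolynomial.C (σ := I) (R := ℂ)), MvPolynomial.C_mul_monomial, mul_one]
    · have : n - l.length ≠ 0 := by omega
      simp [hf, this]
  rw [linearIndependent_iff']
  intro s c hc
  by_contra! hne
  obtain ⟨α₀, hα₀, hcα₀⟩ := hne
  obtain ⟨α, hα, hmax⟩ := Finset.exists_max_image (s.filter fun α => c α ≠ 0) Multiset.card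
    ⟨α₀, by simp [hα₀, hcα₀]⟩
  rw [Finset.mem_filter] at hα
  set d := Multiset.card α with hd
  have h1 := congrArg (fun φ : Module.End ℂ C =>
    MvPolynomial.coeff (Multiset.toFinsupp α) (ε (φ (f ^ d)))) hc
  simp only [LinearMap.sum_apply, LinearMap.smul_apply, map_sum, map_smul, LinearMap.zero_apply,
    map_zero, MvPolynomial.coeff_sum, MvPolynomial.coeff_smul, MvPolynomial.coeff_zero] at h1
  rw [Finset.sum_eq_single α] at h1
  · rw [hlow d _ (by simp [hd])] at h1
    simp [hd, hα.2, Nat.factorial_ne_zero] at h1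
  · intro β hβ hβα
    by_cases hcβ : c β = 0
    · simp [hcβ]
    · have hle := hmax β (by simp [hβ, hcβ])
      rw [hlow d _ (by simpa using hle)]
      split_ifs with h
      · rw [Multiset.coe_toList, MvPolynomial.coeff_monomial, if_neg, smul_zero]
        exact fun h => hβα (Multiset.toFinsupp.injective h)
      · simp
  · exact fun h => absurd hα.1 h

end DifferentialOperators

section MatrixDerivations

open MvPolynomial

variable {κ : Type*} [Fintype κ] (B : Type*) [CommRing B] [Algebra ℂ B]

/-- The left-invariant vector field on the space of square matrices attached to a matrix. -/
noncomputable def matrixDerivation :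
    Matrix κ κ ℂ →ₗ[ℂ] Module.End ℂ (MvPolynomial (κ × κ) B) :=
  { toFun := fun Y => ((mkDerivation B fun p : κ × κ =>
        ∑ k, X (p.1, k) * C (algebraMap ℂ B (Y k p.2))).restrictScalars ℂ :
          Derivation ℂ (MvPolynomial (κ × κ) B) (MvPolynomial (κ × κ) B))
    map_add' := fun Y Z => by
      have : (mkDerivation B fun p : κ × κ =>
          ∑ k, X (p.1, k) * C (algebraMap ℂ B ((Y + Z) k p.2))) =
          mkDerivation B (fun p : κ × κ => ∑ k, X (p.1, k) * C (algebraMap ℂ B (Y k p.2))) +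
          mkDerivation B (fun p : κ × κ => ∑ k, X (p.1, k) * C (algebraMap ℂ B (Z k p.2))) := by
        ext p
        simp [mkDerivation_X, mul_add, Finset.sum_add_distrib]
      rw [this]; rfl
    map_smul' := fun r Y => by
      have : (mkDerivation B fun p : κ × κ =>
          ∑ k, X (p.1, k) * C (algebraMap ℂ B ((r • Y) k p.2))) =
          algebraMap ℂ B r •
          mkDerivation B (fun p : κ × κ => ∑ k, X (p.1, k) * C (algebraMap ℂ B (Y k p.2))) := by
        apply MvPolynomial.derivation_ext
        intro p
        simp only [mkDerivation_X, Derivation.smul_apply, Finset.smul_sum, MvPolynomial.smul_eq_C_mul]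
        refine Finset.sum_congr rfl fun k _ => ?_
        simp; ring
      rw [this]
      refine LinearMap.ext fun a => ?_
      exact algebraMap_smul B r _ }

variable {B}

theorem matrixDerivation_lie (Y Z : Matrix κ κ ℂ) :
    matrixDerivation B (Y * Z - Z * Y) =
      matrixDerivation B Y * matrixDerivation B Z - matrixDerivation B Z * matrixDerivation B Y := by
  let d := fun Y : Matrix κ κ ℂ => mkDerivation B (fun p : κ × κ =>
      ∑ k, X (p.1, k) * C (algebraMap ℂ B (Y k p.2)))
  have hX (Y : Matrix κ κ ℂ) (p : κ × κ) :
      d Y (X p) = ∑ k, X (p.1, k) * C (algebraMap ℂ B (Y k p.2)) := mkDerivation_X _ _ _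
  have key : d (Y * Z - Z * Y) = ⁅d Y, d Z⁆ := by
    have hYZ (Y Z : Matrix κ κ ℂ) (p : κ × κ) :
        d Y (d Z (X p)) = ∑ k, X (p.1, k) * C (algebraMap ℂ B ((Y * Z) k p.2)) := by
      simp only [hX, map_sum, Derivation.leibniz, smul_eq_mul, MvPolynomial.derivation_C, mul_zero,
        zero_add, Matrix.mul_apply, map_mul, Finset.mul_sum]
      rw [Finset.sum_comm]
      refine Finset.sum_congr rfl fun k _ => Finset.sum_congr rfl fun k' _ => ?_
      ring
    apply MvPolynomial.derivation_ext
    intro p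
    rw [Derivation.commutator_apply, hYZ, hYZ, hX, ← Finset.sum_sub_distrib]
    simp [mul_sub]
  refine LinearMap.ext fun a => ?_
  change d (Y * Z - Z * Y) a = d Y (d Z a) - d Z (d Y a)
  rw [key, Derivation.commutator_apply]

/-- Ordered words in the vector fields attached to linearly independent matrices are linearly
independent. -/
theorem linearIndependent_word_matrixDerivation [DecidableEq κ] {I : Type*} (m : I → Matrix κ κ ℂ)
    (hm : LinearIndependent ℂ m) :
    LinearIndependent ℂ fun α : Multiset I =>
      (α.toList.map fun i => matrixDerivation (MvPolynomial I ℂ) (m i)).prod := by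
  obtain ⟨F, hF⟩ : ∃ F : Matrix κ κ ℂ →ₗ[ℂ] MvPolynomial I ℂ, ∀ i, F (m i) = X i := by
    obtain ⟨G, hG⟩ := LinearMap.exists_leftInverse_of_injective _
      (LinearMap.ker_eq_bot.2 hm)
    refine ⟨(Finsupp.linearCombination ℂ fun i => (X i : MvPolynomial I ℂ)) ∘ₗ G, fun i => ?_⟩
    have : G (m i) = Finsupp.single i 1 := by
      simpa using LinearMap.congr_fun hG (Finsupp.single i 1)
    simp [this]
  let ε : MvPolynomial (κ × κ) (MvPolynomial I ℂ) →ₐ[ℂ] MvPolynomial I ℂ :=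
    (aeval (R := MvPolynomial I ℂ) fun p : κ × κ =>
      if p.1 = p.2 then (1 : MvPolynomial I ℂ) else 0).restrictScalars ℂ
  have hεX (p : κ × κ) : ε (X p) = if p.1 = p.2 then 1 else 0 := aeval_X _ _
  have hεC (b : MvPolynomial I ℂ) : ε (C b) = b := aeval_C _ _
  let f₀ : MvPolynomial (κ × κ) (MvPolynomial I ℂ) :=
    ∑ p : κ × κ, C (F (Matrix.single p.1 p.2 1)) * X p
  let d : I → Derivation (MvPolynomial I ℂ) (MvPolynomial (κ × κ) (MvPolynomial I ℂ))
      (MvPolynomial (κ × κ) (MvPolynomial I ℂ)) := fun i =>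
    mkDerivation (MvPolynomial I ℂ) fun p : κ × κ =>
      ∑ k, X (p.1, k) * C (algebraMap ℂ (MvPolynomial I ℂ) (m i k p.2))
  have hd (i : I) (p : κ × κ) : d i (X p) =
      ∑ k, X (p.1, k) * C (algebraMap ℂ (MvPolynomial I ℂ) (m i k p.2)) := mkDerivation_X _ _ _
  refine linearIndependent_word_derivation (fun i => (d i).restrictScalars ℂ) ε (f₀ - C (ε f₀))
    (by simp [hεC]) fun i => ?_
  change ε (d i _) = _
  rw [map_sub, MvPolynomial.derivation_C, sub_zero, ← hF i]
  conv_rhs => rw [Matrix.matrix_eq_sum_single (m i)]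
  simp only [f₀, map_sum]
  rw [Fintype.sum_prod_type]
  refine Finset.sum_congr rfl fun a _ => Finset.sum_congr rfl fun b _ => ?_
  have h1 : Matrix.single a b (m i a b) = m i a b • Matrix.single a b (1 : ℂ) := by
    rw [Matrix.smul_single, smul_eq_mul, mul_one]
  rw [h1, map_smul, ← smul_eq_C_mul, Derivation.map_smul, hd, smul_eq_C_mul, map_mul, hεC,
    Algebra.smul_def, mul_comm]
  simp [hεX, hεC]

end MatrixDerivations

section ShiftMatrices

variable (N c : ℕ)

/-- The matrix of multiplication by `t ^ s * u ^ j` on `ℂ[t,u]/⟨t^N, u^{c+1}⟩`. -/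
noncomputable def shiftMat (s j : ℕ) : Matrix (Fin N × Fin (c + 1)) (Fin N × Fin (c + 1)) ℂ :=
  Matrix.of fun p q => if (p.1 : ℕ) = q.1 + s ∧ (p.2 : ℕ) = q.2 + j then 1 else 0

/-- The matrix of multiplication by `t ^ m` on `ℂ[ħ][t,u]/⟨t^N - ħ u, u^{c+1}⟩`, as a power series
in `ħ`. -/
noncomputable def deformMat (m : ℕ) :
    PowerSeries (Matrix (Fin N × Fin (c + 1)) (Fin N × Fin (c + 1)) ℂ) :=
  PowerSeries.mk fun k => Matrix.of fun p q =>
    if N * (p.2 : ℕ) + p.1 = N * (q.2 : ℕ) + q.1 + m ∧ (p.2 : ℕ) = q.2 + k then 1 else 0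

variable {N c}

theorem shiftMat_mul (s j s' j' : ℕ) :
    shiftMat N c s j * shiftMat N c s' j' = shiftMat N c (s + s') (j + j') := by
  ext p q
  simp only [shiftMat, Matrix.mul_apply, Matrix.of_apply, mul_ite, mul_one, mul_zero]
  split_ifs with h
  · have h1 := p.1.2
    have h2 := p.2.2
    rw [Finset.sum_eq_single (⟨⟨q.1 + s', by omega⟩, ⟨q.2 + j', by omega⟩⟩ : Fin N × Fin (c + 1))]
    · rw [if_pos ⟨rfl, rfl⟩, if_pos (by simp only; omega)]
    · intro r _ hr
      rw [if_neg]
      rintro ⟨h3, h4⟩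
      exact hr (Prod.ext (Fin.ext h3) (Fin.ext h4))
    · exact fun h => absurd (Finset.mem_univ _) h
  · refine Finset.sum_eq_zero fun r _ => ?_
    split_ifs with h1 h2
    · omega
    · rfl
    · rfl

theorem shiftMat_zero : shiftMat N c 0 0 = 1 := by
  ext p q
  simp only [shiftMat, Matrix.of_apply, add_zero, Matrix.one_apply, Prod.ext_iff, Fin.ext_iff]

theorem shiftMat_eq_zero {s j : ℕ} (h : N ≤ s ∨ c + 1 ≤ j) : shiftMat N c s j = 0 := by
  ext p q
  have h1 := p.1.2
  have h2 := p.2.2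
  simp only [shiftMat, Matrix.of_apply, Matrix.zero_apply]
  rw [if_neg (by omega)]

theorem coeff_deformMat (m k : ℕ) (p q : Fin N × Fin (c + 1)) :
    PowerSeries.coeff k (deformMat N c m) p q =
      if N * (p.2 : ℕ) + p.1 = N * (q.2 : ℕ) + q.1 + m ∧ (p.2 : ℕ) = q.2 + k then 1 else 0 := by
  rw [deformMat, PowerSeries.coeff_mk, Matrix.of_apply]

theorem mul_add_div_of_fin (p : Fin N × Fin (c + 1)) : (N * (p.2 : ℕ) + p.1) / N = p.2 := by
  have := p.1.2
  rw [Nat.mul_add_div (by omega), Nat.div_eq_of_lt this, add_zero]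

theorem deformMat_mul (m m' : ℕ) :
    deformMat N c m * deformMat N c m' = deformMat N c (m + m') := by
  ext k p q
  rw [PowerSeries.coeff_mul, coeff_deformMat, Matrix.sum_apply]
  simp only [Matrix.mul_apply, coeff_deformMat, mul_ite, mul_one, mul_zero]
  split_ifs with h
  · obtain ⟨h, h'⟩ := h
    have hN : 0 < N := by have := p.1.2; omega
    have hq := mul_add_div_of_fin q
    have hp := mul_add_div_of_fin p
    have h1 : (N * (q.2 : ℕ) + q.1 + m') / N ≤ p.2 := by
      rw [← hp]; exact Nat.div_le_div_right (by omega)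
    have h2 : (q.2 : ℕ) ≤ (N * (q.2 : ℕ) + q.1 + m') / N := by
      conv_lhs => rw [← hq]
      exact Nat.div_le_div_right (by omega)
    have hp2 := p.2.2
    have hdm := Nat.div_add_mod (N * (q.2 : ℕ) + q.1 + m') N
    let r : Fin N × Fin (c + 1) := ⟨⟨(N * (q.2 : ℕ) + q.1 + m') % N, Nat.mod_lt _ hN⟩,
      ⟨(N * (q.2 : ℕ) + q.1 + m') / N, by omega⟩⟩
    have hr : N * (r.2 : ℕ) + r.1 = N * (q.2 : ℕ) + q.1 + m' := hdm
    have hr2 : (r.2 : ℕ) = (N * (q.2 : ℕ) + q.1 + m') / N := rfl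
    rw [Finset.sum_eq_single ((p.2 - r.2 : ℕ), (r.2 - q.2 : ℕ)), Finset.sum_eq_single r]
    · rw [if_pos (by simp only; omega), if_pos (by simp only; omega)]
    · intro x _ hx
      rw [if_neg]
      rintro ⟨h3, -⟩
      have h4 : (x.2 : ℕ) = r.2 := by rw [hr2, ← h3, mul_add_div_of_fin]
      rw [← hr, h4] at h3
      exact hx (Prod.ext (Fin.ext (by omega)) (Fin.ext h4))
    · exact fun h => absurd (Finset.mem_univ _) h
    · rintro ⟨i, j⟩ _ hij
      refine Finset.sum_eq_zero fun x _ => ?_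
      split_ifs with h3 h4
      · exfalso
        have h5 : (x.2 : ℕ) = r.2 := by rw [hr2, ← h3.1, mul_add_div_of_fin]
        apply hij
        simp only at h3 h4
        rw [Prod.mk.injEq]
        omega
      · rfl
      · rfl
    · intro h3
      refine absurd ?_ h3
      rw [Finset.HasAntidiagonal.mem_antidiagonal]
      omega
  · refine Finset.sum_eq_zero fun ij hij => Finset.sum_eq_zero fun r _ => ?_
    rw [Finset.HasAntidiagonal.mem_antidiagonal] at hij
    split_ifs with h1 h2
    · omega
    · rfl
    · rfl

theorem deformMat_zero : deformMat N c 0 = 1 := by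
  ext k p q
  rw [coeff_deformMat, PowerSeries.coeff_one]
  rcases Nat.eq_zero_or_pos k with rfl | hk
  · rw [if_pos rfl, Matrix.one_apply]
    refine if_congr ?_ rfl rfl
    rw [Prod.ext_iff, Fin.ext_iff, Fin.ext_iff]
    constructor
    · rintro ⟨h1, h2⟩
      rw [add_zero] at h2
      rw [h2] at h1
      omega
    · rintro ⟨h1, h2⟩
      rw [h1, h2]
      omega
  · rw [if_neg (by omega : k ≠ 0), if_neg]
    · rfl
    · rintro ⟨h1, h2⟩
      have hp := mul_add_div_of_fin p
      rw [h1, add_zero, mul_add_div_of_fin] at hp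
      omega

theorem deformMat_pow (m : ℕ) : deformMat N c 1 ^ m = deformMat N c m := by
  induction m with
  | zero => rw [pow_zero, deformMat_zero]
  | succ m ih => rw [pow_succ, ih, deformMat_mul]

theorem deformMat_eq_zero : deformMat N c ((c + 1) * N) = 0 := by
  ext k p q
  rw [coeff_deformMat, if_neg]
  · simp
  · rintro ⟨h, -⟩
    have h1 := p.1.2
    have h2 := p.2.2
    have : N * (p.2 : ℕ) + N ≤ (c + 1) * N := by
      rw [mul_comm (c + 1), ← Nat.mul_succ]; exact Nat.mul_le_mul_left _ h2
    omega

theorem coeff_deformMat_of_lt {m k : ℕ} (h : k < m / N) :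
    PowerSeries.coeff k (deformMat N c m) = 0 := by
  ext p q
  rw [coeff_deformMat, if_neg]
  · rfl
  · rintro ⟨h1, h2⟩
    have hp := mul_add_div_of_fin p
    have hN : 0 < N := by have := p.1.2; omega
    have h3 : N * (q.2 : ℕ) / N + m / N ≤ (N * (p.2 : ℕ) + p.1) / N :=
      Nat.div_add_div_le_add_div.trans (Nat.div_le_div_right (by omega))
    rw [hp, Nat.mul_div_cancel_left _ hN] at h3
    omega

theorem coeff_deformMat_self (s j : ℕ) :
    PowerSeries.coeff j (deformMat N c (j * N + s)) = shiftMat N c s j := by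
  ext p q
  rw [coeff_deformMat, shiftMat, Matrix.of_apply]
  refine if_congr ?_ rfl rfl
  rw [and_congr_left_iff]
  intro h
  rw [h, mul_add, mul_comm j N]
  omega

/-- The representation of `ℂ[t]/t^{(c+1)N}` given by the matrices `deformMat`. -/
noncomputable def truncRep (N c : ℕ) : TruncT ((c + 1) * N) →ₐ[ℂ]
    PowerSeries (Matrix (Fin N × Fin (c + 1)) (Fin N × Fin (c + 1)) ℂ) :=
  Ideal.Quotient.liftₐ _ (Polynomial.aeval (deformMat N c 1)) fun a ha => by
    obtain ⟨b, rfl⟩ := Ideal.mem_span_singleton.1 ha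
    rw [map_mul, map_pow, Polynomial.aeval_X, deformMat_pow, deformMat_eq_zero, zero_mul]

theorem truncRep_mk_X_pow (m : ℕ) :
    truncRep N c (Ideal.Quotient.mk _ (Polynomial.X ^ m)) = deformMat N c m := by
  refine (Ideal.Quotient.liftₐ_apply _ _ _ _).trans ?_
  refine (Ideal.Quotient.lift_mk _ _ _).trans ?_
  change Polynomial.aeval (deformMat N c 1) (Polynomial.X ^ m) = _
  rw [map_pow, Polynomial.aeval_X, deformMat_pow]

theorem X_pow_mul_X_pow_eq_monomial (s j : ℕ) :
    (MvPolynomial.X 0 ^ s * MvPolynomial.X 1 ^ j : MvPolynomial (Fin 2) ℂ) =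
      MvPolynomial.monomial (Finsupp.single 0 s + Finsupp.single 1 j) 1 := by
  rw [MvPolynomial.X_pow_eq_monomial, MvPolynomial.X_pow_eq_monomial, MvPolynomial.monomial_mul,
    one_mul]

/-- The representation of `ℂ[t,u]` given by the matrices `shiftMat`. -/
noncomputable def polyRep (N c : ℕ) : MvPolynomial (Fin 2) ℂ →ₐ[ℂ]
    Matrix (Fin N × Fin (c + 1)) (Fin N × Fin (c + 1)) ℂ :=
  AddMonoidAlgebra.lift ℂ _ (Fin 2 →₀ ℕ)
    { toFun := fun d => shiftMat N c (d.toAdd 0) (d.toAdd 1)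
      map_one' := shiftMat_zero
      map_mul' := fun _ _ => (shiftMat_mul _ _ _ _).symm }

theorem polyRep_X_pow (s j : ℕ) :
    polyRep N c (MvPolynomial.X 0 ^ s * MvPolynomial.X 1 ^ j) = shiftMat N c s j := by
  rw [X_pow_mul_X_pow_eq_monomial]
  refine (AddMonoidAlgebra.lift_single _ _ _).trans ?_
  rw [one_smul]
  change shiftMat N c _ _ = _
  simp

/-- The representation of `ℂ[t,u]/⟨t^N, u^{c+1}⟩` given by the matrices `shiftMat`. -/
noncomputable def toroidalRep (N c : ℕ) : TruncTU N c →ₐ[ℂ]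
    Matrix (Fin N × Fin (c + 1)) (Fin N × Fin (c + 1)) ℂ :=
  Ideal.Quotient.liftₐ _ (polyRep N c) fun a ha => by
    obtain ⟨x, y, rfl⟩ := Ideal.mem_span_pair.1 ha
    have h1 := polyRep_X_pow (N := N) (c := c) N 0
    have h2 := polyRep_X_pow (N := N) (c := c) 0 (c + 1)
    rw [pow_zero, mul_one, shiftMat_eq_zero (Or.inl le_rfl)] at h1
    rw [pow_zero, one_mul, shiftMat_eq_zero (Or.inr le_rfl)] at h2
    rw [map_add, map_mul, map_mul, h1, h2, mul_zero, mul_zero, add_zero]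

theorem toroidalRep_mk (s j : ℕ) :
    toroidalRep N c (Ideal.Quotient.mk _ (MvPolynomial.X 0 ^ s * MvPolynomial.X 1 ^ j)) =
      shiftMat N c s j := by
  refine (Ideal.Quotient.liftₐ_apply _ _ _ _).trans ?_
  refine (Ideal.Quotient.lift_mk _ _ _).trans ?_
  exact polyRep_X_pow s j

end ShiftMatrices

section Realization

open scoped Kronecker

attribute [local instance] LieRing.ofAssociativeRing

theorem lie_compat_of_tmul {R g E : Type*} [CommRing R] [Algebra ℂ R] [LieRing g] [LieAlgebra ℂ g]
    [Ring E] [Algebra ℂ E] (A : R ⊗[ℂ] g →ₗ[ℂ] E)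
    (h : ∀ (p q : R) (x y : g), A ((p * q) ⊗ₜ ⁅x, y⁆) =
      A (p ⊗ₜ x) * A (q ⊗ₜ y) - A (q ⊗ₜ y) * A (p ⊗ₜ x)) (a b : R ⊗[ℂ] g) :
    A ⁅a, b⁆ = A a * A b - A b * A a := by
  induction a with
  | zero => simp
  | add a a' h1 h2 => rw [add_lie, map_add, h1, h2, map_add]; noncomm_ring
  | tmul p x =>
    induction b with
    | zero => simp
    | add b b' h1 h2 => rw [lie_add, map_add, h1, h2, map_add]; noncomm_ring
    | tmul q y => rw [LieAlgebra.ExtendScalars.bracket_tmul, h]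

theorem coeff_complex_smul {E : Type*} [Ring E] [Algebra ℂ E] (r : ℂ) (φ : PowerSeries E) (k : ℕ) :
    PowerSeries.coeff k (r • φ) = r • PowerSeries.coeff k φ := rfl

variable {κ β g : Type*} [Fintype κ] [Fintype β] [LieRing g] [LieAlgebra ℂ g]
  (b : Module.Basis β ℂ g) (B : Type*) [CommRing B] [Algebra ℂ B]

/-- The vector field attached to the Kronecker product of a matrix with an adjoint matrix. -/
noncomputable def kronField : Matrix κ κ ℂ →ₗ[ℂ] Matrix β β ℂ →ₗ[ℂ]
    Module.End ℂ (MvPolynomial ((κ × β) × (κ × β)) B) :=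
  (Matrix.kroneckerBilinear :
    Matrix κ κ ℂ →ₗ[ℂ] Matrix β β ℂ →ₗ[ℂ] Matrix (κ × β) (κ × β) ℂ).compr₂ (matrixDerivation B)

variable {B}

theorem kronField_apply (a : Matrix κ κ ℂ) (x : Matrix β β ℂ) :
    kronField B a x = matrixDerivation B (a ⊗ₖ x) := rfl

theorem kronField_commutator (a a' : Matrix κ κ ℂ) (x x' : Matrix β β ℂ) :
    kronField B a x * kronField B a' x' - kronField B a' x' * kronField B a x =
      kronField B (a * a') (x * x') - kronField B (a' * a) (x' * x) := by
  simp only [kronField_apply]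
  rw [← matrixDerivation_lie, Matrix.mul_kronecker_mul, Matrix.mul_kronecker_mul, map_sub]

variable [DecidableEq β]

/-- The matrix of the adjoint action. -/
noncomputable def adMatrix : g →ₗ[ℂ] Matrix β β ℂ :=
  (LinearMap.toMatrix b b).toLinearMap ∘ₗ (LieAlgebra.ad ℂ g : g →ₗ[ℂ] Module.End ℂ g)

theorem adMatrix_lie (x y : g) :
    adMatrix b ⁅x, y⁆ = adMatrix b x * adMatrix b y - adMatrix b y * adMatrix b x := by
  have h : LieAlgebra.ad ℂ g ⁅x, y⁆ = LieAlgebra.ad ℂ g x * LieAlgebra.ad ℂ g y -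
      LieAlgebra.ad ℂ g y * LieAlgebra.ad ℂ g x := by
    rw [LieHom.map_lie, Ring.lie_def]
  change LinearMap.toMatrix b b (LieAlgebra.ad ℂ g ⁅x, y⁆) = _
  rw [h, map_sub, LinearMap.toMatrix_mul, LinearMap.toMatrix_mul]
  rfl

theorem adMatrix_injective [LieAlgebra.IsSimple ℂ g] : Function.Injective (adMatrix b) := by
  refine (LinearMap.toMatrix b b).injective.comp ?_
  exact (LieHom.ker_eq_bot _).1 (LieAlgebra.ad_ker_eq_bot_of_hasTrivialRadical ℂ g)

variable {R : Type*} [CommRing R] [Algebra ℂ R] [DecidableEq κ]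

variable (B) in
/-- The vector fields attached to a current algebra and a matrix representation of its
coefficients. -/
noncomputable def currentField (ρ : R →ₐ[ℂ] Matrix κ κ ℂ) :
    R ⊗[ℂ] g →ₗ[ℂ] Module.End ℂ (MvPolynomial ((κ × β) × (κ × β)) B) :=
  TensorProduct.lift ((kronField B).compl₁₂ ρ.toLinearMap (adMatrix b))

theorem currentField_tmul (ρ : R →ₐ[ℂ] Matrix κ κ ℂ) (p : R) (x : g) :
    currentField b B ρ (p ⊗ₜ x) = kronField B (ρ p) (adMatrix b x) := by
  simp [currentField]

theorem currentField_lie (ρ : R →ₐ[ℂ] Matrix κ κ ℂ) (y z : R ⊗[ℂ] g) :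
    currentField b B ρ ⁅y, z⁆ = currentField b B ρ y * currentField b B ρ z -
      currentField b B ρ z * currentField b B ρ y := by
  refine lie_compat_of_tmul _ (fun p q x x' => ?_) y z
  simp only [currentField_tmul]
  rw [kronField_commutator, adMatrix_lie, map_sub, ← map_mul ρ q p, mul_comm q p,
    map_mul ρ p q]

variable (B) in
/-- The formal families of vector fields attached to a current algebra and a formal family of
matrix representations of its coefficients. -/
noncomputable def formalCurrentField (ρ : R →ₐ[ℂ] PowerSeries (Matrix κ κ ℂ)) :
    R ⊗[ℂ] g →ₗ[ℂ] PowerSeries (Module.End ℂ (MvPolynomial ((κ × β) × (κ × β)) B)) :=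
  TensorProduct.lift (LinearMap.mk₂ ℂ
    (fun p x => PowerSeries.mk fun k => kronField B (PowerSeries.coeff k (ρ p)) (adMatrix b x))
    (fun p q x => by ext1 k; simp)
    (fun r p x => by
      ext1 k
      rw [coeff_complex_smul, PowerSeries.coeff_mk, PowerSeries.coeff_mk, map_smul,
        coeff_complex_smul, map_smul, LinearMap.smul_apply])
    (fun p x y => by ext1 k; simp)
    (fun r p x => by
      ext1 k
      rw [coeff_complex_smul, PowerSeries.coeff_mk, PowerSeries.coeff_mk, map_smul, map_smul]))

theorem coeff_formalCurrentField_tmul (ρ : R →ₐ[ℂ] PowerSeries (Matrix κ κ ℂ)) (p : R) (x : g)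
    (k : ℕ) : PowerSeries.coeff k (formalCurrentField b B ρ (p ⊗ₜ x)) =
      kronField B (PowerSeries.coeff k (ρ p)) (adMatrix b x) := by
  rw [formalCurrentField, TensorProduct.lift.tmul, LinearMap.mk₂_apply, PowerSeries.coeff_mk]

theorem formalCurrentField_lie (ρ : R →ₐ[ℂ] PowerSeries (Matrix κ κ ℂ)) (y z : R ⊗[ℂ] g) :
    formalCurrentField b B ρ ⁅y, z⁆ = formalCurrentField b B ρ y * formalCurrentField b B ρ z -
      formalCurrentField b B ρ z * formalCurrentField b B ρ y := by
  refine lie_compat_of_tmul _ (fun p q x x' => ?_) y z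
  ext1 n
  have key (p q : R) (x x' : Matrix β β ℂ) :
      kronField B (PowerSeries.coeff n (ρ (p * q))) (x * x') =
        ∑ ij ∈ Finset.HasAntidiagonal.antidiagonal n, kronField B
          (PowerSeries.coeff ij.1 (ρ p) * PowerSeries.coeff ij.2 (ρ q)) (x * x') := by
    rw [map_mul ρ p q, PowerSeries.coeff_mul, map_sum, LinearMap.sum_apply]
  rw [map_sub, PowerSeries.coeff_mul, PowerSeries.coeff_mul,
    ← Finset.Nat.sum_antidiagonal_swap (n := n) (f := fun ij =>
      PowerSeries.coeff ij.1 (formalCurrentField b B ρ (q ⊗ₜ x')) *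
        PowerSeries.coeff ij.2 (formalCurrentField b B ρ (p ⊗ₜ x))), ← Finset.sum_sub_distrib]
  simp only [coeff_formalCurrentField_tmul, Prod.fst_swap, Prod.snd_swap, kronField_commutator]
  rw [Finset.sum_sub_distrib, ← key, adMatrix_lie, map_sub, key, mul_comm p q, key,
    ← Finset.Nat.sum_antidiagonal_swap (n := n) (f := fun ij => kronField B
          (PowerSeries.coeff ij.1 (ρ q) * PowerSeries.coeff ij.2 (ρ p)) _)]
  simp only [Prod.fst_swap, Prod.snd_swap]

/-- The matrices representing the monomial basis of the toroidal current algebra are linearly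
independent. -/
theorem linearIndependent_shiftMat_kronecker (N c : ℕ) [LieAlgebra.IsSimple ℂ g] :
    LinearIndependent ℂ fun i : β × Fin N × Fin (c + 1) =>
      shiftMat N c i.2.1 i.2.2 ⊗ₖ adMatrix b (b i.1) := by
  rw [Fintype.linearIndependent_iff]
  rintro r hr ⟨a, s, j⟩
  have hN : 0 < N := by have := s.2; omega
  have h1 : adMatrix b (∑ a, r (a, s, j) • b a) = 0 := by
    ext d d'
    have h2 := congrFun (congrFun hr ((s, j), d)) ((⟨0, hN⟩, 0), d')
    rw [Matrix.sum_apply, Fintype.sum_prod_type] at h2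
    rw [map_sum, Matrix.sum_apply, Matrix.zero_apply]
    rw [Matrix.zero_apply] at h2
    rw [← h2]
    refine Finset.sum_congr rfl fun a' _ => ?_
    rw [Finset.sum_eq_single (s, j)]
    · simp [shiftMat, Matrix.kroneckerMap_apply]
    · rintro ⟨s', j'⟩ _ hne
      rw [Matrix.smul_apply, Matrix.kroneckerMap_apply, shiftMat, Matrix.of_apply, if_neg]
      · simp
      · rintro ⟨h3, h4⟩
        apply hne
        simp only [Fin.val_zero, zero_add] at h3 h4
        exact Prod.ext (Fin.ext h3.symm) (Fin.ext h4.symm)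
    · exact fun h => absurd (Finset.mem_univ _) h
  have h3 := (map_eq_zero_iff _ (adMatrix_injective b)).1 h1
  exact Fintype.linearIndependent_iff.1 b.linearIndependent (fun a => r (a, s, j)) h3 a

end Realization

section Filtration

attribute [local instance] LieRing.ofAssociativeRing

variable (M N : ℕ) {g : Type*} [LieRing g] [LieAlgebra ℂ g]

theorem span_range_X_pow_tmul (M : ℕ) {β : Type*} (b : Module.Basis β ℂ g) :
    Submodule.span ℂ (Set.range fun i : ℕ × β =>
      (Ideal.Quotient.mk _ (Polynomial.X ^ i.1) : TruncT M) ⊗ₜ[ℂ] b i.2) = ⊤ := by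
  rw [eq_top_iff, ← TensorProduct.span_tmul_eq_top, Submodule.span_le]
  rintro _ ⟨p, x, rfl⟩
  obtain ⟨p, rfl⟩ := Ideal.Quotient.mk_surjective p
  rw [SetLike.mem_coe]
  induction p using Polynomial.induction_on' with
  | add p q hp hq => rw [map_add, TensorProduct.add_tmul]; exact add_mem hp hq
  | monomial m r =>
    rw [← mul_one r, ← smul_eq_mul, ← Polynomial.smul_monomial, ← Polynomial.X_pow_eq_monomial]
    change (r • (Ideal.Quotient.mk _ (Polynomial.X ^ m) : TruncT M)) ⊗ₜ[ℂ] x ∈ _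
    rw [← TensorProduct.smul_tmul']
    refine Submodule.smul_mem _ _ ?_
    have hx : x ∈ Submodule.span ℂ (Set.range b) := by rw [b.span_eq]; trivial
    induction hx using Submodule.span_induction with
    | mem x hx => obtain ⟨i, rfl⟩ := hx; exact Submodule.subset_span ⟨(m, i), rfl⟩
    | zero => rw [TensorProduct.tmul_zero]; exact zero_mem _
    | add x y _ _ hx hy => rw [TensorProduct.tmul_add]; exact add_mem hx hy
    | smul r x _ hx => rw [TensorProduct.tmul_smul]; exact Submodule.smul_mem _ _ hx

/-- The element `x ⊗ t ^ m` of `U(g ⊗ ℂ[t]/t^M)`. -/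
noncomputable def powGen (m : ℕ) : g →ₗ[ℂ] UTrunc M g :=
  (UniversalEnvelopingAlgebra.ι ℂ : TruncT M ⊗[ℂ] g →ₗ⁅ℂ⁆ _).toLinearMap ∘ₗ
    TensorProduct.mk ℂ (TruncT M) g (Ideal.Quotient.mk _ (Polynomial.X ^ m))

variable {M N}

theorem powGen_apply (m : ℕ) (x : g) : powGen M m x = UniversalEnvelopingAlgebra.ι ℂ
    ((Ideal.Quotient.mk _ (Polynomial.X ^ m) : TruncT M) ⊗ₜ[ℂ] x) := rfl

theorem powGen_lie (m m' : ℕ) (x y : g) :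
    powGen M (m + m') ⁅x, y⁆ = powGen M m x * powGen M m' y - powGen M m' y * powGen M m x := by
  rw [powGen_apply, pow_add, map_mul, ← LieAlgebra.ExtendScalars.bracket_tmul, ι_lie]
  rfl

theorem powGen_eq_zero {m : ℕ} (h : M ≤ m) (x : g) : powGen M m x = 0 := by
  have : (Ideal.Quotient.mk _ (Polynomial.X ^ m) : TruncT M) = 0 :=
    Ideal.Quotient.eq_zero_iff_mem.2 (Ideal.mem_span_singleton.2 (pow_dvd_pow _ h))
  rw [powGen_apply, this, TensorProduct.zero_tmul, map_zero]

theorem powGen_mem_Wsub {m : ℕ} (h : N ≤ m) (x : g) : powGen M m x ∈ Wsub M N g := by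
  refine Submodule.subset_span ⟨Polynomial.X ^ (m - N), x, ?_⟩
  rw [← pow_add, Nat.add_sub_cancel' h, powGen_apply]

theorem Wsub_le {S : Submodule ℂ (UTrunc M g)} (h : ∀ m, N ≤ m → ∀ x, powGen M m x ∈ S) :
    Wsub M N g ≤ S := by
  refine Submodule.span_le.2 ?_
  rintro _ ⟨p, x, rfl⟩
  rw [SetLike.mem_coe]
  induction p using Polynomial.induction_on' with
  | add p q hp hq => rw [mul_add, map_add, TensorProduct.add_tmul, map_add]; exact add_mem hp hq
  | monomial m r =>
    have : (Polynomial.X ^ N * Polynomial.monomial m r : Polynomial ℂ) =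
        r • Polynomial.X ^ (N + m) := by
      rw [pow_add, ← mul_smul_comm, Polynomial.X_pow_eq_monomial m, Polynomial.smul_monomial,
        smul_eq_mul, mul_one]
    rw [this]
    change UniversalEnvelopingAlgebra.ι ℂ
      ((r • (Ideal.Quotient.mk _ (Polynomial.X ^ (N + m)) : TruncT M)) ⊗ₜ[ℂ] x) ∈ S
    rw [← TensorProduct.smul_tmul', map_smul]
    exact S.smul_mem _ (h _ (Nat.le_add_right _ _) x)

theorem top_mul_Wsub_le : (⊤ : Submodule ℂ (UTrunc M g)) * Wsub M N g ≤ Wsub M N g * ⊤ := by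
  have hgen (m : ℕ) (x : g) (w : UTrunc M g) (hw : w ∈ Wsub M N g) :
      powGen M m x * w ∈ Wsub M N g * ⊤ := by
    have := Wsub_le (S := (Wsub M N g * ⊤).comap (LinearMap.mulLeft ℂ (powGen M m x)))
      (M := M) (N := N) fun m' hm' x' => by
        have h1 : powGen M m x * powGen M m' x' =
            powGen M (m + m') ⁅x, x'⁆ * 1 + powGen M m' x' * powGen M m x := by
          rw [powGen_lie]; noncomm_ring
        rw [Submodule.mem_comap, LinearMap.mulLeft_apply, h1]
        exact add_mem (Submodule.mul_mem_mul (powGen_mem_Wsub (by omega) _) trivial)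
          (Submodule.mul_mem_mul (powGen_mem_Wsub hm' _) trivial)
    exact this hw
  have hword (l : List (ℕ × Module.Free.ChooseBasisIndex ℂ g)) (w : UTrunc M g)
      (hw : w ∈ Wsub M N g) :
      (l.map fun i => powGen M i.1 (Module.Free.chooseBasis ℂ g i.2)).prod * w ∈
        Wsub M N g * ⊤ := by
    induction l with
    | nil => simpa using Submodule.mul_mem_mul hw (Submodule.mem_top (x := (1 : UTrunc M g)))
    | cons i l ih =>
      rw [List.map_cons, List.prod_cons, mul_assoc]
      refine Submodule.mul_induction_on ih (fun w hw u _ => ?_) fun u v hu hv => ?_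
      · rw [← mul_assoc]
        refine Submodule.mul_induction_on (hgen i.1 (Module.Free.chooseBasis ℂ g i.2) w hw)
          (fun w hw v _ => ?_) fun v v' hv hv' => ?_
        · rw [mul_assoc]
          exact Submodule.mul_mem_mul hw trivial
        · rw [add_mul]
          exact add_mem hv hv'
      · rw [mul_add]
        exact add_mem hu hv
  refine Submodule.mul_le.2 fun u _ w hw => ?_
  have hu : u ∈ (⊤ : Submodule ℂ (UTrunc M g)) := trivial
  rw [← span_words_eq_top _ (span_range_X_pow_tmul M (Module.Free.chooseBasis ℂ g))] at hu
  induction hu using Submodule.span_induction with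
  | mem u hu => obtain ⟨l, rfl⟩ := hu; exact hword l w hw
  | zero => simp
  | add u v _ _ hu hv => rw [add_mul]; exact add_mem (hu trivial) (hv trivial)
  | smul r u _ hu => rw [smul_mul_assoc]; exact Submodule.smul_mem _ _ (hu trivial)

theorem top_mul_Tfil_le (j : ℕ) : ⊤ * Tfil M N g j ≤ Tfil M N g j := by
  induction j with
  | zero => exact le_top
  | succ j ih =>
    change ⊤ * (Wsub M N g * Tfil M N g j) ≤ Wsub M N g * Tfil M N g j
    rw [← mul_assoc]
    calc _ ≤ Wsub M N g * ⊤ * Tfil M N g j := mul_le_mul_left top_mul_Wsub_le _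
      _ = Wsub M N g * (⊤ * Tfil M N g j) := mul_assoc _ _ _
      _ ≤ _ := mul_le_mul_right ih _

theorem Tfil_mul_le (i j : ℕ) : Tfil M N g i * Tfil M N g j ≤ Tfil M N g (i + j) := by
  induction i with
  | zero => rw [zero_add]; exact top_mul_Tfil_le j
  | succ i ih =>
    rw [Nat.succ_add]
    change Wsub M N g * Tfil M N g i * Tfil M N g j ≤ Wsub M N g * Tfil M N g (i + j)
    rw [mul_assoc]
    exact mul_le_mul_right ih _

theorem Tfil_succ_le (j : ℕ) : Tfil M N g (j + 1) ≤ Tfil M N g j :=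
  (mul_le_mul_left le_top _).trans (top_mul_Tfil_le j)

theorem span_lie_eq_top [LieAlgebra.IsSimple ℂ g] :
    Submodule.span ℂ {z : g | ∃ x y : g, z = ⁅x, y⁆} = ⊤ := by
  have h := LieSubmodule.lieIdeal_oper_eq_linear_span' (R := ℂ) (L := g) (M := g)
    (I := ⊤) (N := ⊤)
  rcases LieAlgebra.IsSimple.eq_bot_or_eq_top (R := ℂ) ⁅(⊤ : LieIdeal ℂ g), (⊤ : LieIdeal ℂ g)⁆
    with h0 | h0
  · refine absurd ⟨fun x y => ?_⟩ (LieAlgebra.IsSimple.non_abelian ℂ (L := g))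
    rw [← LieSubmodule.mem_bot (R := ℂ) (L := g), ← h0]
    exact LieSubmodule.lie_mem_lie trivial trivial
  · rw [h0] at h
    rw [← LieSubmodule.top_toSubmodule (R := ℂ) (L := g), h]
    congr 1
    ext z
    simp [eq_comm]

theorem powGen_mem_Tfil [LieAlgebra.IsSimple ℂ g] {m j : ℕ} (h : j * N ≤ m) (x : g) :
    powGen M m x ∈ Tfil M N g j := by
  induction j generalizing m x with
  | zero => trivial
  | succ j ih =>
    rw [Nat.succ_mul] at h
    have hx : x ∈ Submodule.span ℂ {z : g | ∃ x y : g, z = ⁅x, y⁆} := by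
      rw [span_lie_eq_top]; trivial
    induction hx using Submodule.span_induction with
    | mem x hx =>
      obtain ⟨y, z, rfl⟩ := hx
      have h1 : powGen M N y ∈ Tfil M N g 1 := by
        rw [← mul_one (powGen M N y)]
        exact Submodule.mul_mem_mul (powGen_mem_Wsub le_rfl y) trivial
      have h2 : powGen M (m - N) z ∈ Tfil M N g j := ih (by omega) z
      have hm : m = N + (m - N) := by omega
      rw [hm, powGen_lie]
      refine sub_mem ?_ (Tfil_mul_le _ _ (Submodule.mul_mem_mul h2 h1))
      rw [add_comm j 1]
      exact Tfil_mul_le _ _ (Submodule.mul_mem_mul h1 h2)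
    | zero => rw [map_zero]; exact zero_mem _
    | add x y _ _ hx hy => rw [map_add]; exact add_mem hx hy
    | smul r x _ hx => rw [map_smul]; exact Submodule.smul_mem _ _ hx

end Filtration

section Generators

attribute [local instance] LieRing.ofAssociativeRing

variable {N c : ℕ} {g β : Type*} [LieRing g] [LieAlgebra ℂ g] (b : Module.Basis β ℂ g)

theorem Tfil_antitone (M N : ℕ) : Antitone (Tfil M N g) :=
  antitone_nat_of_succ_le Tfil_succ_le

/-- The generators `x ⊗ t^(jN+s)` of `U(g ⊗ ℂ[t]/t^M)`, for `x` in a basis. -/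
noncomputable def truncGen (i : β × Fin N × Fin (c + 1)) : UTrunc ((c + 1) * N) g :=
  powGen ((c + 1) * N) (i.2.2 * N + i.2.1) (b i.1)

theorem powGen_mem_span_truncGen {s j : ℕ} (hs : s < N) (x : g) :
    powGen ((c + 1) * N) (j * N + s) x ∈ Submodule.span ℂ
      {z | ∃ i : β × Fin N × Fin (c + 1), (i.2.2 : ℕ) = j ∧ z = truncGen b i} := by
  rcases Nat.lt_or_ge j (c + 1) with hj | hj
  · have hx : x ∈ Submodule.span ℂ (Set.range b) := by rw [b.span_eq]; trivial
    induction hx using Submodule.span_induction with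
    | mem x hx =>
      obtain ⟨a, rfl⟩ := hx
      exact Submodule.subset_span ⟨(a, ⟨s, hs⟩, ⟨j, hj⟩), rfl, rfl⟩
    | zero => rw [map_zero]; exact zero_mem _
    | add x y _ _ hx hy => rw [map_add]; exact add_mem hx hy
    | smul r x _ hx => rw [map_smul]; exact Submodule.smul_mem _ _ hx
  · rw [powGen_eq_zero ((Nat.mul_le_mul_right N hj).trans (Nat.le_add_right _ _))]
    exact zero_mem _

theorem span_range_truncGen_tmul (hN : 0 < N) :
    Submodule.span ℂ (Set.range fun i : β × Fin N × Fin (c + 1) =>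
      (Ideal.Quotient.mk _ (Polynomial.X ^ (i.2.2 * N + i.2.1 : ℕ)) : TruncT ((c + 1) * N))
        ⊗ₜ[ℂ] b i.1) = ⊤ := by
  rw [eq_top_iff, ← span_range_X_pow_tmul _ b, Submodule.span_le]
  rintro _ ⟨⟨m, a⟩, rfl⟩
  rcases Nat.lt_or_ge m ((c + 1) * N) with hm | hm
  · refine Submodule.subset_span
      ⟨(a, ⟨m % N, Nat.mod_lt _ hN⟩, ⟨m / N, Nat.div_lt_of_lt_mul (by rwa [mul_comm])⟩), ?_⟩
    simp only [Nat.div_add_mod']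
  · have : (Ideal.Quotient.mk _ (Polynomial.X ^ m) : TruncT ((c + 1) * N)) = 0 :=
      Ideal.Quotient.eq_zero_iff_mem.2 (Ideal.mem_span_singleton.2 (pow_dvd_pow _ hm))
    simp only [this, TensorProduct.zero_tmul]
    exact zero_mem _

theorem word_truncGen_mem_Tfil [LieAlgebra.IsSimple ℂ g] (l : List (β × Fin N × Fin (c + 1))) :
    (l.map (truncGen b)).prod ∈ Tfil ((c + 1) * N) N g (l.map fun i => (i.2.2 : ℕ)).sum := by
  induction l with
  | nil => trivial
  | cons i l ih =>
    exact Tfil_mul_le _ _ (Submodule.mul_mem_mul (powGen_mem_Tfil (Nat.le_add_right _ _) _) ih)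

theorem Tfil_le_span_word (hN : 0 < N) (j : ℕ) :
    Tfil ((c + 1) * N) N g j ≤ Submodule.span ℂ {z | ∃ l : List (β × Fin N × Fin (c + 1)),
      j ≤ (l.map fun i => (i.2.2 : ℕ)).sum ∧ z = (l.map (truncGen b)).prod} := by
  induction j with
  | zero =>
    have h := span_words_eq_top (L := TruncT ((c + 1) * N) ⊗[ℂ] g) _
      (span_range_truncGen_tmul (c := c) b hN)
    refine le_top.trans (h.symm.le.trans (Submodule.span_mono ?_))
    rintro _ ⟨l, rfl⟩
    exact ⟨l, Nat.zero_le _, rfl⟩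
  | succ j ih =>
    have hW : Wsub ((c + 1) * N) N g ≤ Submodule.span ℂ
        {z | ∃ i : β × Fin N × Fin (c + 1), 1 ≤ (i.2.2 : ℕ) ∧ z = truncGen b i} := by
      refine Wsub_le fun m hm x => ?_
      have h := powGen_mem_span_truncGen (c := c) b (j := m / N) (Nat.mod_lt m hN) x
      rw [Nat.div_add_mod'] at h
      refine Submodule.span_mono ?_ h
      rintro _ ⟨i, hi, rfl⟩
      exact ⟨i, hi ▸ (Nat.one_le_div_iff hN).2 hm, rfl⟩
    refine (mul_le_mul' hW ih).trans ?_
    rw [Submodule.span_mul_span, Submodule.span_le]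
    rintro _ ⟨_, ⟨i, hi, rfl⟩, _, ⟨l, hl, rfl⟩, rfl⟩
    refine Submodule.subset_span ⟨i :: l, ?_, by simp⟩
    rw [List.map_cons, List.sum_cons]
    omega

theorem truncGen_commutator_mem [LieAlgebra.IsSimple ℂ g] (i k : β × Fin N × Fin (c + 1)) :
    truncGen b i * truncGen b k - truncGen b k * truncGen b i ∈
      Submodule.span ℂ {z | ∃ l : β × Fin N × Fin (c + 1),
        (l.2.2 : ℕ) = i.2.2 + k.2.2 ∧ z = truncGen b l} ⊔
      Tfil ((c + 1) * N) N g (i.2.2 + k.2.2 + 1) := by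
  have h : truncGen b i * truncGen b k - truncGen b k * truncGen b i =
      powGen ((c + 1) * N) ((i.2.2 + k.2.2) * N + (i.2.1 + k.2.1)) ⁅b i.1, b k.1⁆ := by
    rw [truncGen, truncGen, ← powGen_lie]
    congr 2
    ring
  rw [h]
  rcases Nat.lt_or_ge (i.2.1 + k.2.1 : ℕ) N with hs | hs
  · exact Submodule.mem_sup_left (powGen_mem_span_truncGen b hs _)
  · refine Submodule.mem_sup_right (powGen_mem_Tfil ?_ _)
    rw [Nat.succ_mul]
    omega

theorem Tfil_le_span_multiset [LieAlgebra.IsSimple ℂ g] (hN : 0 < N) (j : ℕ) :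
    Tfil ((c + 1) * N) N g j ≤ Submodule.span ℂ {z | ∃ α : Multiset (β × Fin N × Fin (c + 1)),
      (α.map fun i => (i.2.2 : ℕ)).sum = j ∧ z = (α.toList.map (truncGen b)).prod} ⊔
      Tfil ((c + 1) * N) N g (j + 1) := by
  refine (Tfil_le_span_word b hN j).trans (Submodule.span_le.2 ?_)
  rintro _ ⟨l, hl, rfl⟩
  rcases hl.eq_or_lt with rfl | hl
  · exact word_mem_span_multiset (truncGen b) (fun i => (i.2.2 : ℕ)) (Tfil ((c + 1) * N) N g)
      Tfil_mul_le (fun i => powGen_mem_Tfil (Nat.le_add_right _ _) _)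
      (truncGen_commutator_mem b) l
  · exact Submodule.mem_sup_right (Tfil_antitone _ _ hl (word_truncGen_mem_Tfil b l))

/-- The element `x ⊗ t^s u^j` of `U(g ⊗ ℂ[t,u]/⟨t^N,u^{c+1}⟩)`. -/
noncomputable def toroidalPowGen (N c s j : ℕ) : g →ₗ[ℂ] UToroidal N c g :=
  (UniversalEnvelopingAlgebra.ι ℂ : TruncTU N c ⊗[ℂ] g →ₗ⁅ℂ⁆ _).toLinearMap ∘ₗ
    TensorProduct.mk ℂ (TruncTU N c) g
      (Ideal.Quotient.mk _ (MvPolynomial.X 0 ^ s * MvPolynomial.X 1 ^ j))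

theorem toroidalPowGen_apply (s j : ℕ) (x : g) :
    toroidalPowGen N c s j x = UniversalEnvelopingAlgebra.ι ℂ
      ((Ideal.Quotient.mk _ (MvPolynomial.X 0 ^ s * MvPolynomial.X 1 ^ j) : TruncTU N c)
        ⊗ₜ[ℂ] x) := rfl

theorem toroidalPowGen_lie (s j s' j' : ℕ) (x y : g) :
    toroidalPowGen N c (s + s') (j + j') ⁅x, y⁆ =
      toroidalPowGen N c s j x * toroidalPowGen N c s' j' y -
        toroidalPowGen N c s' j' y * toroidalPowGen N c s j x := by
  have h : (MvPolynomial.X 0 ^ (s + s') * MvPolynomial.X 1 ^ (j + j') : MvPolynomial (Fin 2) ℂ) =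
      (MvPolynomial.X 0 ^ s * MvPolynomial.X 1 ^ j) *
        (MvPolynomial.X 0 ^ s' * MvPolynomial.X 1 ^ j') := by ring
  rw [toroidalPowGen_apply, h, map_mul, ← LieAlgebra.ExtendScalars.bracket_tmul, ι_lie]
  rfl

theorem mk_X_pow_mul_X_pow_eq_zero {s j : ℕ} (h : N ≤ s ∨ c + 1 ≤ j) :
    (Ideal.Quotient.mk _ (MvPolynomial.X 0 ^ s * MvPolynomial.X 1 ^ j) : TruncTU N c) = 0 := by
  refine Ideal.Quotient.eq_zero_iff_mem.2 ?_
  rcases h with h | h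
  · exact Ideal.mul_mem_right _ _ (Ideal.mem_of_dvd _ (pow_dvd_pow _ h)
      (Ideal.subset_span (Set.mem_insert _ _)))
  · exact Ideal.mul_mem_left _ _ (Ideal.mem_of_dvd _ (pow_dvd_pow _ h)
      (Ideal.subset_span (Set.mem_insert_of_mem _ rfl)))

/-- The generators `x ⊗ t^s u^j` of `U(g ⊗ ℂ[t,u]/⟨t^N,u^{c+1}⟩)`, for `x` in a basis. -/
noncomputable def toroidalGen (i : β × Fin N × Fin (c + 1)) : UToroidal N c g :=
  toroidalPowGen N c i.2.1 i.2.2 (b i.1)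

theorem toroidalPowGen_mem_span_toroidalGen (s j : ℕ) (x : g) :
    toroidalPowGen N c s j x ∈ Submodule.span ℂ
      (Set.range (toroidalGen b : β × Fin N × Fin (c + 1) → _)) := by
  by_cases h : N ≤ s ∨ c + 1 ≤ j
  · rw [toroidalPowGen_apply, mk_X_pow_mul_X_pow_eq_zero h, TensorProduct.zero_tmul, map_zero]
    exact zero_mem _
  push Not at h
  have hx : x ∈ Submodule.span ℂ (Set.range b) := by rw [b.span_eq]; trivial
  induction hx using Submodule.span_induction with
  | mem x hx =>
    obtain ⟨a, rfl⟩ := hx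
    exact Submodule.subset_span ⟨(a, ⟨s, h.1⟩, ⟨j, h.2⟩), rfl⟩
  | zero => rw [map_zero]; exact zero_mem _
  | add x y _ _ hx hy => rw [map_add]; exact add_mem hx hy
  | smul r x _ hx => rw [map_smul]; exact Submodule.smul_mem _ _ hx

theorem span_range_toroidalGen_tmul :
    Submodule.span ℂ (Set.range fun i : β × Fin N × Fin (c + 1) =>
      (Ideal.Quotient.mk _ (MvPolynomial.X 0 ^ (i.2.1 : ℕ) * MvPolynomial.X 1 ^ (i.2.2 : ℕ)) :
        TruncTU N c) ⊗ₜ[ℂ] b i.1) = ⊤ := by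
  rw [eq_top_iff, ← TensorProduct.span_tmul_eq_top, Submodule.span_le]
  rintro _ ⟨p, x, rfl⟩
  obtain ⟨p, rfl⟩ := Ideal.Quotient.mk_surjective p
  rw [SetLike.mem_coe]
  induction p using MvPolynomial.induction_on' with
  | add p q hp hq => rw [map_add, TensorProduct.add_tmul]; exact add_mem hp hq
  | monomial d r =>
    have hd : (MvPolynomial.monomial d r : MvPolynomial (Fin 2) ℂ) =
        r • (MvPolynomial.X 0 ^ d 0 * MvPolynomial.X 1 ^ d 1) := by
      have h : Finsupp.single 0 (d 0) + Finsupp.single 1 (d 1) = d := by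
        ext k
        fin_cases k <;> simp
      rw [X_pow_mul_X_pow_eq_monomial, h, MvPolynomial.smul_monomial, smul_eq_mul, mul_one]
    rw [hd]
    change (r • (Ideal.Quotient.mk _ (MvPolynomial.X 0 ^ d 0 * MvPolynomial.X 1 ^ d 1) :
      TruncTU N c)) ⊗ₜ[ℂ] x ∈ _
    rw [← TensorProduct.smul_tmul']
    refine Submodule.smul_mem _ _ ?_
    by_cases h : N ≤ d 0 ∨ c + 1 ≤ d 1
    · rw [mk_X_pow_mul_X_pow_eq_zero h, TensorProduct.zero_tmul]
      exact zero_mem _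
    push Not at h
    have hx : x ∈ Submodule.span ℂ (Set.range b) := by rw [b.span_eq]; trivial
    induction hx using Submodule.span_induction with
    | mem x hx =>
      obtain ⟨a, rfl⟩ := hx
      exact Submodule.subset_span ⟨(a, ⟨d 0, h.1⟩, ⟨d 1, h.2⟩), rfl⟩
    | zero => rw [TensorProduct.tmul_zero]; exact zero_mem _
    | add x y _ _ hx hy => rw [TensorProduct.tmul_add]; exact add_mem hx hy
    | smul r x _ hx => rw [TensorProduct.tmul_smul]; exact Submodule.smul_mem _ _ hx

theorem span_word_toroidalGen_eq_top :
    Submodule.span ℂ (Set.range fun α : Multiset (β × Fin N × Fin (c + 1)) =>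
      (α.toList.map (toroidalGen b)).prod) = ⊤ := by
  rw [eq_top_iff, ← span_words_eq_top _ (span_range_toroidalGen_tmul b), Submodule.span_le]
  rintro _ ⟨l, rfl⟩
  let T : ℕ → Submodule ℂ (UToroidal N c g) := fun n => if n = 0 then ⊤ else ⊥
  have h := word_mem_span_multiset (toroidalGen b) (fun _ => 0) T
    (fun i j => by
      rcases i with _ | i
      · rcases j with _ | j
        · exact le_top
        · simp [T]
      · simp [T])
    (fun i => trivial)
    (fun i k => by
      refine Submodule.mem_sup_left ?_
      rw [toroidalGen, toroidalGen, ← toroidalPowGen_lie]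
      refine Submodule.span_mono ?_ (toroidalPowGen_mem_span_toroidalGen b _ _ _)
      rintro _ ⟨l, rfl⟩
      exact ⟨l, rfl, rfl⟩) l
  have hT : T ((l.map fun _ => 0).sum + 1) = ⊥ := if_neg (Nat.succ_ne_zero _)
  rw [hT, sup_bot_eq] at h
  refine Submodule.span_mono ?_ h
  rintro _ ⟨α, -, rfl⟩
  exact ⟨α, rfl⟩

end Generators

section Comparison

attribute [local instance] LieRing.ofAssociativeRing

theorem coeff_mul_of_coeff_eq_zero {E : Type*} [Ring E] {φ χ : PowerSeries E} {i j : ℕ}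
    (hφ : ∀ k < i, PowerSeries.coeff k φ = 0) (hχ : ∀ k < j, PowerSeries.coeff k χ = 0) :
    PowerSeries.coeff (i + j) (φ * χ) = PowerSeries.coeff i φ * PowerSeries.coeff j χ := by
  rw [PowerSeries.coeff_mul, Finset.sum_eq_single (i, j)]
  · rintro ⟨k, l⟩ hkl hne
    rw [Finset.HasAntidiagonal.mem_antidiagonal] at hkl
    rcases lt_trichotomy k i with h | rfl | h
    · rw [hφ k h, zero_mul]
    · exact absurd (by simp only [Prod.mk.injEq, true_and]; omega) hne
    · rw [hχ l (by omega), mul_zero]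
  · intro h
    exact absurd (Finset.HasAntidiagonal.mem_antidiagonal.2 rfl : (i, j) ∈ _) h

theorem injective_of_linearIndependent_comp {ι V W : Type*} [AddCommMonoid V] [Module ℂ V]
    [AddCommMonoid W] [Module ℂ W] (f : V →ₗ[ℂ] W) {v : ι → V}
    (hv : Submodule.span ℂ (Set.range v) = ⊤) (h : LinearIndependent ℂ (f ∘ v)) :
    Function.Injective f := by
  intro x y hxy
  have hspan (z : V) : ∃ l, Finsupp.linearCombination ℂ v l = z := by
    have hz : z ∈ Submodule.span ℂ (Set.range v) := by rw [hv]; trivial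
    exact Finsupp.mem_span_range_iff_exists_finsupp.1 hz
  obtain ⟨l, rfl⟩ := hspan x
  obtain ⟨l', rfl⟩ := hspan y
  rw [Finsupp.apply_linearCombination, Finsupp.apply_linearCombination] at hxy
  rw [h hxy]

variable {N c : ℕ} {g E : Type*} [LieRing g] [LieAlgebra ℂ g] [Ring E] [Algebra ℂ E]
  (Φ : UTrunc ((c + 1) * N) g →ₐ[ℂ] PowerSeries E) (Θ : UToroidal N c g →ₐ[ℂ] E)

theorem coeff_eq_zero_of_mem_Tfil
    (hΦ : ∀ m, N ≤ m → ∀ x, PowerSeries.coeff 0 (Φ (powGen _ m x)) = 0)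
    {j : ℕ} {u : UTrunc ((c + 1) * N) g}
    (hu : u ∈ Tfil ((c + 1) * N) N g j) {k : ℕ} (hk : k < j) :
    PowerSeries.coeff k (Φ u) = 0 := by
  induction j generalizing u k with
  | zero => omega
  | succ j ih =>
    refine Submodule.mul_induction_on hu (fun w hw v hv => ?_) fun v w hv hw => ?_
    · have hw0 : w ∈ LinearMap.ker
          (((PowerSeries.coeff (R := E) 0).restrictScalars ℂ) ∘ₗ Φ.toLinearMap) :=
        Wsub_le hΦ hw
      have hw1 : PowerSeries.coeff 0 (Φ w) = 0 := hw0
      rw [map_mul, PowerSeries.coeff_mul]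
      refine Finset.sum_eq_zero fun p hp => ?_
      rw [Finset.HasAntidiagonal.mem_antidiagonal] at hp
      rcases Nat.eq_zero_or_pos p.1 with h | h
      · rw [h, hw1, zero_mul]
      · rw [ih hv (by omega), mul_zero]
    · rw [map_add, map_add, hv, hw, add_zero]

theorem coeff_add_mul_of_mem_Tfil
    (hΦ : ∀ m, N ≤ m → ∀ x, PowerSeries.coeff 0 (Φ (powGen _ m x)) = 0)
    {i j : ℕ} {u v : UTrunc ((c + 1) * N) g}
    (hu : u ∈ Tfil ((c + 1) * N) N g i) (hv : v ∈ Tfil ((c + 1) * N) N g j) :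
    PowerSeries.coeff (i + j) (Φ (u * v)) =
      PowerSeries.coeff i (Φ u) * PowerSeries.coeff j (Φ v) := by
  rw [map_mul]
  exact coeff_mul_of_coeff_eq_zero (fun k hk => coeff_eq_zero_of_mem_Tfil Φ hΦ hu hk)
    fun k hk => coeff_eq_zero_of_mem_Tfil Φ hΦ hv hk

/-- The leading coefficient of an element of the `j`-th filtration step. -/
noncomputable def leadingCoeffMap (j : ℕ) : Tfil ((c + 1) * N) N g j →ₗ[ℂ] E :=
  (PowerSeries.coeff (R := E) j).restrictScalars ℂ ∘ₗ
    Φ.toLinearMap ∘ₗ (Tfil ((c + 1) * N) N g j).subtype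

/-- The map on the associated graded space induced by taking leading coefficients. -/
noncomputable def grSymbol
    (hΦ : ∀ m, N ≤ m → ∀ x, PowerSeries.coeff 0 (Φ (powGen _ m x)) = 0) :
    grT ((c + 1) * N) N g →ₗ[ℂ] E :=
  DirectSum.toModule ℂ ℕ _ fun j => Submodule.liftQ _ (leadingCoeffMap Φ j) fun _ hu =>
    LinearMap.mem_ker.2 (coeff_eq_zero_of_mem_Tfil Φ hΦ hu (Nat.lt_succ_self j))

theorem grSymbol_of_mk
    (hΦ : ∀ m, N ≤ m → ∀ x, PowerSeries.coeff 0 (Φ (powGen _ m x)) = 0) {j : ℕ}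
    (u : Tfil ((c + 1) * N) N g j) :
    grSymbol Φ hΦ (DirectSum.of _ j (Submodule.Quotient.mk u)) =
      PowerSeries.coeff j (Φ u) :=
  (DirectSum.toModule_lof ℂ j _).trans rfl

variable [LieAlgebra.IsSimple ℂ g] {β : Type*} (b : Module.Basis β ℂ g)

/-- The class of an ordered word in the generators in the associated graded space. -/
noncomputable def grWord (α : Multiset (β × Fin N × Fin (c + 1))) :
    grT ((c + 1) * N) N g :=
  DirectSum.of (fun j : ℕ => (Tfil ((c + 1) * N) N g j ⧸
      (Tfil ((c + 1) * N) N g (j + 1)).comap (Tfil ((c + 1) * N) N g j).subtype))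
    (α.toList.map fun i => (i.2.2 : ℕ)).sum
    (Submodule.Quotient.mk ⟨_, word_truncGen_mem_Tfil b α.toList⟩)

theorem span_range_grWord_eq_top (hN : 0 < N) :
    Submodule.span ℂ (Set.range (grWord (N := N) (c := c) b)) = ⊤ := by
  set S := Submodule.span ℂ (Set.range (grWord (N := N) (c := c) b)) with hS
  rw [eq_top_iff]
  rintro z -
  induction z using DirectSum.induction_on with
  | zero => exact zero_mem _
  | add u v hu hv => exact add_mem hu hv
  | of j u =>
    obtain ⟨⟨u, hu⟩, rfl⟩ := Submodule.Quotient.mk_surjective _ u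
    let P : Submodule ℂ (UTrunc ((c + 1) * N) g) := (S.comap (DirectSum.lof ℂ ℕ
      (fun j : ℕ => (Tfil ((c + 1) * N) N g j ⧸
        (Tfil ((c + 1) * N) N g (j + 1)).comap (Tfil ((c + 1) * N) N g j).subtype)) j ∘ₗ
        Submodule.mkQ _)).map (Tfil ((c + 1) * N) N g j).subtype
    have hP : Tfil ((c + 1) * N) N g j ≤ P := by
      refine (Tfil_le_span_multiset b hN j).trans (sup_le (Submodule.span_le.2 ?_) fun v hv => ?_)
      · rintro _ ⟨α, hα, rfl⟩
        have hα' : (α.toList.map fun i => (i.2.2 : ℕ)).sum = j := by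
          rw [← hα, ← Multiset.sum_coe, ← Multiset.map_coe, Multiset.coe_toList]
        subst hα'
        exact ⟨⟨_, word_truncGen_mem_Tfil b α.toList⟩, Submodule.subset_span ⟨α, rfl⟩, rfl⟩
      · refine ⟨⟨v, Tfil_succ_le j hv⟩, ?_, rfl⟩
        have h0 : Submodule.mkQ ((Tfil ((c + 1) * N) N g (j + 1)).comap
            (Tfil ((c + 1) * N) N g j).subtype) ⟨v, Tfil_succ_le j hv⟩ = 0 :=
          (Submodule.Quotient.mk_eq_zero _).2 hv
        change DirectSum.lof ℂ ℕ _ j (Submodule.mkQ _ _) ∈ S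
        rw [h0, map_zero]
        exact zero_mem _
    obtain ⟨⟨v, hv⟩, hvS, rfl⟩ := hP hu
    exact hvS

variable {Φ Θ}

theorem grSymbol_grWord
    (hΦ : ∀ m, N ≤ m → ∀ x, PowerSeries.coeff 0 (Φ (powGen _ m x)) = 0)
    (hΘ : ∀ s j x, PowerSeries.coeff j (Φ (powGen _ (j * N + s) x)) =
      Θ (toroidalPowGen N c s j x)) (α : Multiset (β × Fin N × Fin (c + 1))) :
    grSymbol Φ hΦ (grWord b α) = Θ (α.toList.map (toroidalGen b)).prod := by
  refine (grSymbol_of_mk Φ hΦ _).trans ?_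
  change PowerSeries.coeff _ (Φ (α.toList.map (truncGen b)).prod) = _
  induction α.toList with
  | nil => simp
  | cons i l ih =>
    rw [List.map_cons, List.map_cons, List.map_cons, List.prod_cons, List.prod_cons,
      List.sum_cons]
    refine (coeff_add_mul_of_mem_Tfil Φ hΦ (powGen_mem_Tfil (Nat.le_add_right _ _) _)
        (word_truncGen_mem_Tfil b l)).trans ?_
    rw [ih, map_mul]
    congr 1
    exact hΘ _ _ _

/-- Realizations of the two enveloping algebras with matching leading coefficients, and with
linearly independent words in the generators, give rise to the comparison isomorphism. -/
theorem exists_grT_equiv (hN : 0 < N)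
    (hΦ : ∀ m, N ≤ m → ∀ x, PowerSeries.coeff 0 (Φ (powGen _ m x)) = 0)
    (hΘ : ∀ s j x, PowerSeries.coeff j (Φ (powGen _ (j * N + s) x)) =
      Θ (toroidalPowGen N c s j x))
    (hli : LinearIndependent ℂ fun α : Multiset (β × Fin N × Fin (c + 1)) =>
      Θ (α.toList.map (toroidalGen b)).prod) :
    ∃ e : grT ((c + 1) * N) N g ≃ₗ[ℂ] UToroidal N c g,
      (∀ (h : (1 : UTrunc ((c + 1) * N) g) ∈ Tfil ((c + 1) * N) N g 0),
        e (DirectSum.of _ 0 (Submodule.Quotient.mk ⟨1, h⟩)) = 1) ∧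
      (∀ (i j : ℕ) (a : Tfil ((c + 1) * N) N g i) (b : Tfil ((c + 1) * N) N g j)
          (h : (a : UTrunc ((c + 1) * N) g) * b ∈ Tfil ((c + 1) * N) N g (i + j)),
        e (DirectSum.of _ (i + j) (Submodule.Quotient.mk ⟨(a : UTrunc ((c + 1) * N) g) * b, h⟩))
          = e (DirectSum.of _ i (Submodule.Quotient.mk a)) *
              e (DirectSum.of _ j (Submodule.Quotient.mk b))) ∧
      (∀ (x : g) (j s : ℕ) (_ : s < N)
          (h : UniversalEnvelopingAlgebra.ι ℂ
              ((Ideal.Quotient.mk _ (Polynomial.X ^ (j * N + s)) : TruncT ((c + 1) * N))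
                ⊗ₜ[ℂ] x) ∈ Tfil ((c + 1) * N) N g j),
        e (DirectSum.of _ j (Submodule.Quotient.mk ⟨_, h⟩))
          = UniversalEnvelopingAlgebra.ι ℂ
              ((Ideal.Quotient.mk _ (MvPolynomial.X 0 ^ s * MvPolynomial.X 1 ^ j) :
                TruncTU N c) ⊗ₜ[ℂ] x)) := by
  have hword := grSymbol_grWord b hΦ hΘ
  have hinj : Function.Injective Θ.toLinearMap :=
    injective_of_linearIndependent_comp Θ.toLinearMap (span_word_toroidalGen_eq_top b) hli
  have hinj' : Function.Injective (grSymbol Φ hΦ) := by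
    refine injective_of_linearIndependent_comp (grSymbol Φ hΦ)
      (span_range_grWord_eq_top b hN) ?_
    convert hli with α
    exact hword α
  have hrange : LinearMap.range (grSymbol Φ hΦ) = LinearMap.range Θ.toLinearMap := by
    rw [LinearMap.range_eq_map, LinearMap.range_eq_map, ← span_range_grWord_eq_top b hN,
      ← span_word_toroidalGen_eq_top b, Submodule.map_span, Submodule.map_span,
      ← Set.range_comp, ← Set.range_comp]
    congr 2
    funext α
    exact hword α
  let e := LinearEquiv.ofInjective _ hinj' ≪≫ₗ LinearEquiv.ofEq _ _ hrange ≪≫ₗ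
    (LinearEquiv.ofInjective Θ.toLinearMap hinj).symm
  have he (z) : Θ (e z) = grSymbol Φ hΦ z :=
    congrArg Subtype.val ((LinearEquiv.ofInjective Θ.toLinearMap hinj).apply_symm_apply _)
  refine ⟨e, fun h => hinj ?_, fun i j u v h => hinj ?_, fun x j s _ h => hinj ?_⟩
  · change Θ _ = Θ _
    rw [he, grSymbol_of_mk, map_one Φ, map_one Θ, PowerSeries.coeff_zero_one]
  · change Θ _ = Θ _
    rw [map_mul, he, he, he, grSymbol_of_mk, grSymbol_of_mk, grSymbol_of_mk]
    exact coeff_add_mul_of_mem_Tfil Φ hΦ u.2 v.2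
  · change Θ _ = Θ _
    rw [he, grSymbol_of_mk]
    exact hΘ s j x

end Comparison

/-- Theorem 3.5 (Lemma 3.4 on the level of the cyclic module `A` itself): for a
finite-dimensional complex simple Lie algebra `g` and `M = (c+1)N`, the associated
graded algebra of `A = U(g ⊗ ℂ[t]/t^M)` with respect to the `t^N`-filtration
`T_0 = A`, `T_j = (g ⊗ t^N ℂ[t])·T_{j−1}` is isomorphic as an associative algebra to
`U(g ⊗ ℂ[t,u]/⟨t^N,u^{c+1}⟩)`: there is a linear equivalence `e` which is unital and
multiplicative with respect to the graded product (`[a]·[b] = [ab]` for `a ∈ T_i`,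
`b ∈ T_j`, `ab ∈ T_{i+j}`) and sends the class in `T_j/T_{j+1}` of
`x ⊗ t^{jN+s}` (for `0 ≤ s < N`) to `x ⊗ u^j t^s`. -/
theorem gr_iso_toroidal (N c : ℕ) (hN : 0 < N) (hc : 0 < c)
    (g : Type*) [LieRing g] [LieAlgebra ℂ g]
    [FiniteDimensional ℂ g] [LieAlgebra.IsSimple ℂ g] :
    ∃ e : grT ((c + 1) * N) N g ≃ₗ[ℂ] UToroidal N c g,
      (∀ (h : (1 : UTrunc ((c + 1) * N) g) ∈ Tfil ((c + 1) * N) N g 0),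
        e (DirectSum.of _ 0 (Submodule.Quotient.mk ⟨1, h⟩)) = 1) ∧
      (∀ (i j : ℕ) (a : Tfil ((c + 1) * N) N g i) (b : Tfil ((c + 1) * N) N g j)
          (h : (a : UTrunc ((c + 1) * N) g) * b ∈ Tfil ((c + 1) * N) N g (i + j)),
        e (DirectSum.of _ (i + j) (Submodule.Quotient.mk ⟨(a : UTrunc ((c + 1) * N) g) * b, h⟩))
          = e (DirectSum.of _ i (Submodule.Quotient.mk a)) *
              e (DirectSum.of _ j (Submodule.Quotient.mk b))) ∧
      (∀ (x : g) (j s : ℕ) (_ : s < N)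
          (h : UniversalEnvelopingAlgebra.ι ℂ
              ((Ideal.Quotient.mk _ (Polynomial.X ^ (j * N + s)) : TruncT ((c + 1) * N))
                ⊗ₜ[ℂ] x) ∈ Tfil ((c + 1) * N) N g j),
        e (DirectSum.of _ j (Submodule.Quotient.mk ⟨_, h⟩))
          = UniversalEnvelopingAlgebra.ι ℂ
              ((Ideal.Quotient.mk _ (MvPolynomial.X 0 ^ s * MvPolynomial.X 1 ^ j) :
                TruncTU N c) ⊗ₜ[ℂ] x)) := by
  classical
  let b := Module.finBasis ℂ g
  let B := MvPolynomial (Fin (Module.finrank ℂ g) × Fin N × Fin (c + 1)) ℂ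
  let Φ := envLift (L := TruncT ((c + 1) * N) ⊗[ℂ] g) (formalCurrentField b B (truncRep N c))
    (formalCurrentField_lie b _)
  let Θ := envLift (L := TruncTU N c ⊗[ℂ] g) (currentField b B (toroidalRep N c))
    (currentField_lie b _)
  have hpow (m k : ℕ) (x : g) : PowerSeries.coeff k (Φ (powGen _ m x)) =
      kronField B (PowerSeries.coeff k (deformMat N c m)) (adMatrix b x) := by
    rw [powGen_apply, envLift_ι, coeff_formalCurrentField_tmul, truncRep_mk_X_pow]
  have htor (s j : ℕ) (x : g) :
      Θ (toroidalPowGen N c s j x) = kronField B (shiftMat N c s j) (adMatrix b x) := by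
    rw [toroidalPowGen_apply, envLift_ι, currentField_tmul, toroidalRep_mk]
  have hΦ (m : ℕ) (hm : N ≤ m) (x : g) : PowerSeries.coeff 0 (Φ (powGen _ m x)) = 0 := by
    rw [hpow, coeff_deformMat_of_lt (Nat.div_pos hm hN), map_zero, LinearMap.zero_apply]
  have hΘ (s j : ℕ) (x : g) : PowerSeries.coeff j (Φ (powGen _ (j * N + s) x)) =
      Θ (toroidalPowGen N c s j x) := by
    rw [hpow, htor, coeff_deformMat_self]
  have hli : LinearIndependent ℂ fun α : Multiset (_ × Fin N × Fin (c + 1)) =>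
      Θ (α.toList.map (toroidalGen b)).prod := by
    have hm (α : Multiset (_ × Fin N × Fin (c + 1))) : Θ (α.toList.map (toroidalGen b)).prod =
        (α.toList.map fun i => matrixDerivation B (Matrix.kronecker
          (shiftMat N c i.2.1 i.2.2) (adMatrix b (b i.1)))).prod := by
      rw [map_list_prod, List.map_map]
      congr 2
      funext i
      exact htor _ _ _
    simp_rw [hm]
    exact linearIndependent_word_matrixDerivation _ (linearIndependent_shiftMat_kronecker b N c)
  exact exists_grT_equiv b hN hΦ hΘ hli
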